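/- If G ∈ F_q^{m×n} is triorthogonal with parameter k and weights σ, τ, then 𝒢_0^⊥ = m_σ(𝒢_1) + 𝒢^⊥, and moreover m_σ(𝒢_1) ∩ 𝒢^⊥ = {0}. -/

import Mathlib

open scoped Classical

noncomputable section

/-- A matrix `G ∈ F^{m×n}` (rows `G a`) is *triorthogonal* with parameter `k`
and weights `σ : Fin n → F`, `τ : Fin k → F` (all nonzero) if
(i) `∑ i, (G a i)^4 (G b i)^2 (G c i)` is `1` when `a = b = c` is among the first `k`
rows and `0` otherwise, and
(ii) `∑ i, σ i * G a i * G b i` is `τ a` when `a = b` is among the first `k` rows and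
`0` otherwise. -/
def IsTriorthogonal {F : Type} [Field F] {m n k : ℕ} (G : Fin m → Fin n → F)
    (σ : Fin n → F) (τ : Fin k → F) : Prop :=
  (∀ i, σ i ≠ 0) ∧ (∀ a, τ a ≠ 0) ∧
  (∀ a b c : Fin m, ∑ i, (G a i) ^ 4 * (G b i) ^ 2 * (G c i) =
      if a = b ∧ b = c ∧ (a : ℕ) < k then 1 else 0) ∧
  (∀ a b : Fin m, ∑ i, σ i * G a i * G b i =
      if h : a = b ∧ (a : ℕ) < k then τ ⟨(a : ℕ), h.2⟩ else 0)

/-- The dual code `V^⊥ = {x : ∑ i, x i * y i = 0 for all y ∈ V}`. -/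
def dualCode {F : Type} [Field F] {n : ℕ} (V : Submodule F (Fin n → F)) :
    Submodule F (Fin n → F) where
  carrier := {x | ∀ y ∈ V, ∑ i, x i * y i = 0}
  add_mem' := by
    intro a b ha hb y hy
    calc ∑ i, (a + b) i * y i = (∑ i, a i * y i) + ∑ i, b i * y i := by
          rw [← Finset.sum_add_distrib]
          exact Finset.sum_congr rfl fun i _ => by simp [add_mul]
      _ = 0 := by rw [ha y hy, hb y hy]; ring
  zero_mem' := by intro y hy; simp
  smul_mem' := by
    intro c a ha y hy
    calc ∑ i, (c • a) i * y i = c * ∑ i, a i * y i := by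
          rw [Finset.mul_sum]
          exact Finset.sum_congr rfl fun i _ => by simp [mul_assoc]
      _ = 0 := by rw [ha y hy]; ring

/-- Componentwise multiplication `m_w(v)_i = w i * v i` as a linear map. -/
def mulComp {F : Type} [Field F] {n : ℕ} (w : Fin n → F) :
    (Fin n → F) →ₗ[F] (Fin n → F) where
  toFun v := fun i => w i * v i
  map_add' a b := by funext i; simp [mul_add]
  map_smul' c a := by
    funext i
    simp only [Pi.smul_apply, smul_eq_mul, RingHom.id_apply]
    ring

/-!
By (ii), pairing the scaled first rows `σ * G a` with the first rows gives a diagonal matrix with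
nonzero entries `τ a`, so `F^n = m_σ(𝒢₁) ⊕ 𝒢₁^⊥`. Since `m_σ(𝒢₁) ≤ 𝒢₀^⊥` and
`𝒢^⊥ = 𝒢₁^⊥ ⊓ 𝒢₀^⊥`, intersecting this decomposition with `𝒢₀^⊥` by the modular law gives both
claims.
-/

section Biorthogonal

variable {R M ι : Type*} [Ring R] [AddCommGroup M] [Module R M] [DecidableEq ι]
  {u : ι → M} {φ : ι → M →ₗ[R] R} {τ : ι → R}

theorem apply_linearCombination_of_biorthogonal
    (h : ∀ a b, φ b (u a) = if a = b then τ a else 0) (c : ι →₀ R) (b : ι) :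
    φ b (Finsupp.linearCombination R u c) = c b * τ b := by
  simp +contextual [Finsupp.linearCombination_apply, Finsupp.sum, h]

theorem disjoint_span_range_iInf_ker (hτ : ∀ a, IsRightRegular (τ a))
    (h : ∀ a b, φ b (u a) = if a = b then τ a else 0) :
    Disjoint (Submodule.span R (Set.range u)) (⨅ b, LinearMap.ker (φ b)) := by
  rw [← Finsupp.range_linearCombination, Submodule.disjoint_def]
  rintro _ ⟨c, rfl⟩ hφ
  have hc : c = 0 := Finsupp.ext fun b ↦ by
    have hb := (Submodule.mem_iInf _).1 hφ b
    rwa [LinearMap.mem_ker, apply_linearCombination_of_biorthogonal h,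
      (hτ b).mul_right_eq_zero_iff] at hb
  rw [hc, map_zero]

theorem codisjoint_span_range_iInf_ker [Finite ι] (hτ : ∀ a, IsUnit (τ a))
    (h : ∀ a b, φ b (u a) = if a = b then τ a else 0) :
    Codisjoint (Submodule.span R (Set.range u)) (⨅ b, LinearMap.ker (φ b)) := by
  rw [← Finsupp.range_linearCombination, Submodule.codisjoint_iff_exists_add_eq]
  intro x
  let c : ι →₀ R := Finsupp.equivFunOnFinite.symm fun a ↦ φ a x * Ring.inverse (τ a)
  let p : M := Finsupp.linearCombination R u c
  have hφp : ∀ b, φ b p = φ b x := fun b ↦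
    calc
      φ b p = φ b x * Ring.inverse (τ b) * τ b := apply_linearCombination_of_biorthogonal h c b
      _ = φ b x := by rw [mul_assoc, Ring.inverse_mul_cancel _ (hτ b), mul_one]
  refine ⟨p, x - p, LinearMap.mem_range_self _ c, ?_, add_sub_cancel p x⟩
  simp [Submodule.mem_iInf, hφp]

theorem isCompl_span_range_iInf_ker [Finite ι] (hτ : ∀ a, IsUnit (τ a))
    (h : ∀ a b, φ b (u a) = if a = b then τ a else 0) :
    IsCompl (Submodule.span R (Set.range u)) (⨅ b, LinearMap.ker (φ b)) :=
  ⟨disjoint_span_range_iInf_ker (fun a ↦ (hτ a).isRegular.right) h,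
    codisjoint_span_range_iInf_ker hτ h⟩

end Biorthogonal

section DualCode

variable {F : Type} [Field F] {n : ℕ}

theorem mem_dualCode_iff_le_ker {V : Submodule F (Fin n → F)} {x : Fin n → F} :
    x ∈ dualCode V ↔ V ≤ LinearMap.ker (dotProductBilin F F x) :=
  Iff.rfl

theorem dualCode_sup (V W : Submodule F (Fin n → F)) :
    dualCode (V ⊔ W) = dualCode V ⊓ dualCode W := by
  ext x
  simp only [Submodule.mem_inf, mem_dualCode_iff_le_ker, sup_le_iff]

theorem mem_dualCode_span_range {ι : Type*} {v : ι → Fin n → F} {x : Fin n → F} :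
    x ∈ dualCode (Submodule.span F (Set.range v)) ↔ ∀ a, x ⬝ᵥ v a = 0 := by
  rw [mem_dualCode_iff_le_ker, Submodule.span_le, Set.range_subset_iff]
  rfl

theorem dualCode_span_range {ι : Type*} (v : ι → Fin n → F) :
    dualCode (Submodule.span F (Set.range v)) =
      ⨅ a, LinearMap.ker (dotProductBilin F F (v a)) := by
  ext x
  simp [mem_dualCode_span_range, dotProduct_comm x]

theorem isCompl_span_range_dualCode {ι : Type*} [Finite ι] [DecidableEq ι]
    {u v : ι → Fin n → F} {τ : ι → F} (hτ : ∀ a, τ a ≠ 0)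
    (h : ∀ a b, u a ⬝ᵥ v b = if a = b then τ a else 0) :
    IsCompl (Submodule.span F (Set.range u)) (dualCode (Submodule.span F (Set.range v))) := by
  rw [dualCode_span_range]
  exact isCompl_span_range_iInf_ker (fun a ↦ (hτ a).isUnit) fun a b ↦
    (dotProduct_comm (v b) (u a)).trans (h a b)

theorem dualCode_eq_sup_dualCode_sup {U V W : Submodule F (Fin n → F)}
    (hUV : Codisjoint U (dualCode V)) (hUW : U ≤ dualCode W) :
    dualCode W = U ⊔ dualCode (V ⊔ W) := by
  rw [dualCode_sup, ← sup_inf_assoc_of_le _ hUW, hUV.eq_top, top_inf_eq]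

theorem map_mulComp_span_range {ι : Type*} (σ : Fin n → F) (g : ι → Fin n → F) :
    (Submodule.span F (Set.range g)).map (mulComp σ) =
      Submodule.span F (Set.range fun a ↦ mulComp σ (g a)) := by
  rw [Submodule.map_span, ← Set.range_comp']

end DualCode

theorem range_eq_range_castLE_union_range_add {α : Type*} {m k : ℕ} (hkm : k ≤ m) (f : Fin m → α) :
    Set.range f = (Set.range fun a : Fin k ↦ f (Fin.castLE hkm a)) ∪
      Set.range fun a : Fin (m - k) ↦ f ⟨k + (a : ℕ), by omega⟩ := by
  refine Set.Subset.antisymm ?_ (Set.union_subset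
    (Set.range_subset_iff.2 fun _ ↦ Set.mem_range_self _)
    (Set.range_subset_iff.2 fun _ ↦ Set.mem_range_self _))
  rintro _ ⟨b, rfl⟩
  obtain hb | hb := lt_or_ge (b : ℕ) k
  · exact Or.inl ⟨⟨b, hb⟩, rfl⟩
  · exact Or.inr ⟨⟨b - k, by omega⟩, congrArg f (Fin.ext (Nat.add_sub_cancel' hb))⟩

theorem IsTriorthogonal.mulComp_castLE_dotProduct {F : Type} [Field F] {m n k : ℕ}
    {G : Fin m → Fin n → F} {σ : Fin n → F} {τ : Fin k → F} (hG : IsTriorthogonal G σ τ)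
    (hkm : k ≤ m) (a : Fin k) (b : Fin m) :
    mulComp σ (G (Fin.castLE hkm a)) ⬝ᵥ G b = if Fin.castLE hkm a = b then τ a else 0 :=
  (hG.2.2.2 (Fin.castLE hkm a) b).trans (by simp)

theorem dual_span_last_eq_scaled_first_sup_dual_general {F : Type} [Field F] {m n k : ℕ}
    (hkm : k ≤ m) (G : Fin m → Fin n → F) (σ : Fin n → F) (τ : Fin k → F) (hτ : ∀ a, τ a ≠ 0)
    (hG : ∀ (a : Fin k) (b : Fin m),
      mulComp σ (G (Fin.castLE hkm a)) ⬝ᵥ G b = if Fin.castLE hkm a = b then τ a else 0) :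
    dualCode (Submodule.span F (Set.range fun a : Fin (m - k) ↦ G ⟨k + (a : ℕ), by omega⟩)) =
      (Submodule.span F (Set.range fun a : Fin k ↦ G (Fin.castLE hkm a))).map (mulComp σ) ⊔
        dualCode (Submodule.span F (Set.range G)) ∧
    (Submodule.span F (Set.range fun a : Fin k ↦ G (Fin.castLE hkm a))).map (mulComp σ) ⊓
      dualCode (Submodule.span F (Set.range G)) = ⊥ := by
  rw [range_eq_range_castLE_union_range_add hkm G, Submodule.span_union, map_mulComp_span_range]
  have h_compl : IsCompl
      (Submodule.span F (Set.range fun a : Fin k ↦ mulComp σ (G (Fin.castLE hkm a))))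
      (dualCode (Submodule.span F (Set.range fun a : Fin k ↦ G (Fin.castLE hkm a)))) :=
    isCompl_span_range_dualCode hτ fun a b ↦ by simp [hG, (Fin.castLE_injective hkm).eq_iff]
  refine ⟨dualCode_eq_sup_dualCode_sup h_compl.codisjoint ?_, ?_⟩
  · rw [Submodule.span_le, Set.range_subset_iff]
    refine fun a ↦ mem_dualCode_span_range.2 fun b ↦ (hG a _).trans (if_neg ?_)
    exact Fin.ne_of_val_ne (a.isLt.trans_le (Nat.le_add_right k b)).ne
  · rw [dualCode_sup]
    exact (h_compl.disjoint.mono_right inf_le_left).eq_bot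

/-- If `G` is triorthogonal with parameter `k` and weights `σ, τ`, then
`𝒢₀^⊥ = m_σ(𝒢₁) + 𝒢^⊥` and `m_σ(𝒢₁) ∩ 𝒢^⊥ = {0}`. -/
theorem dual_span_last_eq_scaled_first_sup_dual
    {s m n k : ℕ} (hs : 1 ≤ s) (hk : 1 ≤ k) (hkm : k ≤ m)
    {F : Type} [Field F] [Fintype F] (hF : Fintype.card F = 2 ^ s)
    (G : Fin m → Fin n → F) (σ : Fin n → F) (τ : Fin k → F)
    (hG : IsTriorthogonal G σ τ) :
    dualCode (Submodule.span F (Set.range fun a : Fin (m - k) => G ⟨k + (a : ℕ), by have := a.2; omega⟩)) =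
        (Submodule.span F (Set.range fun a : Fin k => G (Fin.castLE hkm a))).map (mulComp σ) ⊔
          dualCode (Submodule.span F (Set.range G)) ∧
    (Submodule.span F (Set.range fun a : Fin k => G (Fin.castLE hkm a))).map (mulComp σ) ⊓
        dualCode (Submodule.span F (Set.range G)) = ⊥ := by
  exact dual_span_last_eq_scaled_first_sup_dual_general hkm G σ τ hG.2.1
    (hG.mulComp_castLE_dotProduct hkm)
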